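/- Let p be a probability mass function on a countable set 𝒳 with finite Shannon entropy H(p). Then there exists a sequence of dyadic probability mass functions q_1, q_2, q_3, … on 𝒳 such that p(x) = ∑_{w=1}^∞ 2^{-w} q_w(x) for every x ∈ 𝒳, and ∑_{w=1}^∞ 2^{-w} H(q_w) ≥ H(p) − 2. -/

import Mathlib

/-- A probability mass function is dyadic if each of its nonzero values is `2^{-j}` for
some nonnegative integer `j`. -/
def IsDyadicPMF {𝒳 : Type*} (q : 𝒳 → ℝ) : Prop :=
  (∀ x, 0 ≤ q x) ∧ (∑' x, q x) = 1 ∧ ∀ x, q x ≠ 0 → ∃ j : ℕ, q x = (2 : ℝ) ^ (-(j : ℤ))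

/-- The Shannon entropy (in bits) of a probability mass function. -/
noncomputable def pmfEntropy {𝒳 : Type*} (q : 𝒳 → ℝ) : ℝ :=
  ∑' x, -(q x) * Real.logb 2 (q x)

open Finset in
/-- A finite family of dyadic numbers with sum at least one has a subfamily with sum one. -/
lemma exists_subset_sum_one {ι : Type*} (j : ι → ℕ) (S : Finset ι)
    (hS : 1 ≤ ∑ x ∈ S, ((1 : ℝ) / 2) ^ (j x)) :
    ∃ T ⊆ S, ∑ x ∈ T, ((1 : ℝ) / 2) ^ (j x) = 1 := by
  classical
  induction S using Finset.strongInduction with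
  | H S ih =>
    have hne : S.Nonempty := by
      rw [Finset.nonempty_iff_ne_empty]
      rintro rfl
      norm_num at hS
    obtain ⟨x, hx, hmax⟩ := Finset.exists_max_image S j hne
    by_cases h : 1 ≤ ∑ y ∈ S.erase x, ((1 : ℝ) / 2) ^ (j y)
    · obtain ⟨T, hT, hs⟩ := ih _ (Finset.erase_ssubset hx) h
      exact ⟨T, hT.trans (Finset.erase_subset _ _), hs⟩
    · refine ⟨S, Finset.Subset.refl _, le_antisymm ?_ hS⟩
      push Not at h
      rw [← Finset.add_sum_erase S _ hx]
      have key : ∀ T ⊆ S, ∑ y ∈ T, ((1 : ℝ) / 2) ^ (j y)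
          = ((∑ y ∈ T, 2 ^ (j x - j y) : ℕ) : ℝ) * (1 / 2) ^ (j x) := by
        intro T hT
        push_cast
        rw [Finset.sum_mul]
        refine Finset.sum_congr rfl fun y hy => ?_
        have := hmax y (hT hy)
        obtain ⟨d, hd⟩ := Nat.exists_eq_add_of_le this
        rw [hd, Nat.add_sub_cancel_left, pow_add, mul_comm, mul_assoc, ← mul_pow]
        norm_num
      rw [key _ (Finset.erase_subset _ _)] at h ⊢
      set N := ∑ y ∈ S.erase x, 2 ^ (j x - j y)
      have h2 : (2 : ℝ) ^ (j x) * (1 / 2) ^ (j x) = 1 := by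
        rw [← mul_pow]; norm_num
      have hpos : (0 : ℝ) < (1 / 2) ^ (j x) := by positivity
      have h3 : (N : ℝ) < ((2 ^ (j x) : ℕ) : ℝ) := by
        push_cast
        exact lt_of_mul_lt_mul_right (h.trans_eq h2.symm) hpos.le
      have h4 : N + 1 ≤ 2 ^ (j x) := by exact_mod_cast h3
      have h5 : (N : ℝ) + 1 ≤ 2 ^ (j x) := by exact_mod_cast h4
      calc _ = ((N : ℝ) + 1) * (1 / 2) ^ (j x) := by ring
        _ ≤ 2 ^ (j x) * (1 / 2) ^ (j x) := by gcongr
        _ = 1 := h2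

/-- Below twice any pmf there is a dyadic pmf with finite support. -/
lemma exists_dyadic_le {X : Type*} (p : X → ℝ) (hp0 : ∀ x, 0 ≤ p x) (hp : HasSum p 1) :
    ∃ q : X → ℝ, (∀ x, 0 ≤ q x) ∧ HasSum q 1 ∧
      (∀ x, q x ≠ 0 → ∃ j : ℕ, q x = (2 : ℝ) ^ (-(j : ℤ))) ∧ (∀ x, q x ≤ 2 * p x) ∧
      (Function.support q).Finite := by
  classical
  suffices h : ∃ (j : X → ℕ) (T : Finset X), ∑ x ∈ T, ((1 : ℝ) / 2) ^ (j x) = 1 ∧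
      ∀ x ∈ T, ((1 : ℝ) / 2) ^ (j x) ≤ 2 * p x by
    obtain ⟨j, T, hT, hle⟩ := h
    refine ⟨fun x => if x ∈ T then ((1 : ℝ) / 2) ^ (j x) else 0, ?_, ?_, ?_, ?_, ?_⟩
    · intro x; dsimp only; split_ifs <;> positivity
    · have hs := hasSum_sum_of_ne_finset_zero (L := .unconditional _) (s := T)
        (f := fun x => if x ∈ T then ((1 : ℝ) / 2) ^ (j x) else 0) (fun x hx => if_neg hx)
      rwa [Finset.sum_congr rfl (fun x hx => if_pos hx), hT] at hs
    · intro x hx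
      refine ⟨j x, ?_⟩
      dsimp only at hx ⊢
      split_ifs at hx ⊢
      · simp
      · simp at hx
    · intro x
      dsimp only
      split_ifs with h
      · exact hle x h
      · have := hp0 x; positivity
    · refine T.finite_toSet.subset fun x hx => ?_
      by_contra h
      simp at h
      simp [h] at hx
  by_cases hbig : ∃ x, 1 / 2 ≤ p x
  · obtain ⟨x, hx⟩ := hbig
    refine ⟨fun _ => 0, {x}, by simp, ?_⟩
    intro y hy
    simp at hy
    subst hy
    simp
    linarith
  · push Not at hbig
    have hex : ∀ x, ∃ j : ℕ, 0 < p x → p x < (1 / 2 : ℝ) ^ j ∧ (1 / 2 : ℝ) ^ j ≤ 2 * p x := by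
      intro x
      by_cases h : 0 < p x
      · have hE : ∃ n : ℕ, (1 / 2 : ℝ) ^ n ≤ 2 * p x := by
          obtain ⟨n, hn⟩ := exists_pow_lt_of_lt_one (x := 2 * p x) (y := (1 / 2 : ℝ))
            (by linarith) (by norm_num)
          exact ⟨n, hn.le⟩
        refine ⟨Nat.find hE, fun _ => ⟨?_, Nat.find_spec hE⟩⟩
        rcases hn : Nat.find hE with _ | n
        · have := hbig x
          rw [pow_zero]
          linarith
        · have := Nat.find_min hE (m := n) (by omega)
          push Not at this
          rw [pow_succ]
          linarith
      · exact ⟨0, fun h' => absurd h' h⟩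
    choose j hj using hex
    let r : X → ℝ := fun x => if 0 < p x then (1 / 2 : ℝ) ^ (j x) else 0
    have hpr : ∀ x, p x ≤ r x := by
      intro x; dsimp only [r]; split_ifs with h
      · exact (hj x h).1.le
      · exact not_lt.1 h
    have hr2 : ∀ x, r x ≤ 2 * p x := by
      intro x; dsimp only [r]; split_ifs with h
      · exact (hj x h).2
      · have := hp0 x; positivity
    have hr0 : ∀ x, 0 ≤ r x := fun x => (hp0 x).trans (hpr x)
    have hrs : Summable r := Summable.of_nonneg_of_le hr0 hr2 (hp.summable.mul_left 2)
    obtain ⟨x0, hx0⟩ : ∃ x, 0 < p x := by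
      by_contra hcon
      push Not at hcon
      have : p = fun _ => 0 := funext fun x => le_antisymm (hcon x) (hp0 x)
      rw [this] at hp
      exact zero_ne_one (hasSum_zero.unique hp)
    have hlt : 1 < ∑' x, r x := by
      rw [← hp.tsum_eq]
      refine Summable.tsum_lt_tsum (i := x0) hpr ?_ hp.summable hrs
      dsimp only [r]; rw [if_pos hx0]; exact (hj x0 hx0).1
    obtain ⟨S, hS⟩ := (hrs.hasSum.eventually (lt_mem_nhds hlt)).exists
    have hS' : 1 ≤ ∑ x ∈ S.filter (fun x => 0 < p x), ((1 : ℝ) / 2) ^ (j x) := by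
      rw [Finset.sum_filter]; exact hS.le
    obtain ⟨T, hTS, hT⟩ := exists_subset_sum_one j _ hS'
    exact ⟨j, T, hT, fun x hx => (hj x (Finset.mem_filter.1 (hTS hx)).2).2⟩

/-- The decomposition into dyadic pmfs. -/
lemma exists_decomp {X : Type*} (p : X → ℝ) (hp0 : ∀ x, 0 ≤ p x) (hp : HasSum p 1) :
    ∃ q : ℕ → X → ℝ, (∀ w x, 0 ≤ q w x) ∧ (∀ w, HasSum (q w) 1) ∧
      (∀ w x, q w x ≠ 0 → ∃ j : ℕ, q w x = (2 : ℝ) ^ (-(j : ℤ))) ∧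
      (∀ x, HasSum (fun w : ℕ => ((1 : ℝ) / 2) ^ (w + 1) * q w x) (p x)) := by
  let P := {f : X → ℝ // (∀ x, 0 ≤ f x) ∧ HasSum f 1}
  have hstep : ∀ f : P, ∃ q : X → ℝ, (∀ x, 0 ≤ q x) ∧ HasSum q 1 ∧
      (∀ x, q x ≠ 0 → ∃ j : ℕ, q x = (2 : ℝ) ^ (-(j : ℤ))) ∧ (∀ x, q x ≤ 2 * f.1 x) ∧
      (Function.support q).Finite := fun f => exists_dyadic_le f.1 f.2.1 f.2.2
  choose g hg0 hg1 hgd hgle _ using hstep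
  let next : P → P := fun f => ⟨fun x => 2 * f.1 x - g f x,
    fun x => by linarith [hgle f x], by
      have := (f.2.2.mul_left 2).sub (hg1 f)
      norm_num at this
      exact this⟩
  let s : ℕ → P := fun n => Nat.rec ⟨p, hp0, hp⟩ (fun _ f => next f) n
  have hs0 : (s 0).1 = p := rfl
  have hs1 : ∀ n x, (s (n + 1)).1 x = 2 * (s n).1 x - g (s n) x := fun n x => rfl
  refine ⟨fun n => g (s n), fun w => hg0 _, fun w => hg1 _, fun w => hgd _, fun x => ?_⟩
  have hsum : ∀ n, ∑ w ∈ Finset.range n, ((1 : ℝ) / 2) ^ (w + 1) * g (s w) x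
      = p x - (1 / 2) ^ n * (s n).1 x := by
    intro n
    induction n with
    | zero => simp [hs0]
    | succ n ih => rw [Finset.sum_range_succ, ih, hs1]; ring
  rw [hasSum_iff_tendsto_nat_of_nonneg
    (fun w => mul_nonneg (by positivity) (hg0 _ _))]
  simp_rw [hsum]
  have hle1 : ∀ n, (s n).1 x ≤ 1 := fun n => le_hasSum (s n).2.2 x fun y _ => (s n).2.1 y
  have hz : Filter.Tendsto (fun n => ((1 : ℝ) / 2) ^ n * (s n).1 x) Filter.atTop (nhds 0) := by
    refine squeeze_zero (fun n => mul_nonneg (by positivity) ((s n).2.1 x)) (fun n => ?_)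
      (tendsto_pow_atTop_nhds_zero_of_lt_one (r := (1 : ℝ) / 2) (by norm_num) (by norm_num))
    exact mul_le_of_le_one_right (by positivity) (hle1 n)
  simpa using hz.const_sub (p x)

/-- Pointwise Gibbs inequality. -/
lemma gibbs_pointwise (a b : ℝ) (ha : 0 ≤ a) (hb : 0 ≤ b) (h : b = 0 → a = 0) :
    -a * Real.logb 2 a ≤ a * (-Real.logb 2 b) + (b / Real.log 2) := by
  have hl : 0 < Real.log 2 := Real.log_pos (by norm_num)
  rcases ha.eq_or_lt with rfl | ha
  · simp; positivity
  · have hb' : 0 < b := lt_of_le_of_ne hb fun h' => ha.ne' (h h'.symm)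
    have h1 := Real.log_le_sub_one_of_pos (div_pos hb' ha)
    rw [Real.log_div hb'.ne' ha.ne'] at h1
    have h2 : a * (Real.log b - Real.log a) ≤ b := by
      have := mul_le_mul_of_nonneg_left h1 ha.le
      rw [mul_sub a (b / a), mul_div_cancel₀ b ha.ne'] at this
      linarith
    unfold Real.logb
    have h3 : a * (Real.log b - Real.log a) / Real.log 2 ≤ b / Real.log 2 := by gcongr
    have h4 : a * (Real.log b - Real.log a) / Real.log 2
      = -a * (Real.log a / Real.log 2) - a * (-(Real.log b / Real.log 2)) := by ring
    linarith

set_option maxHeartbeats 2000000 in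
theorem stmt12 {𝒳 : Type*} [Countable 𝒳] (p : 𝒳 → ℝ)
    (hp0 : ∀ x, 0 ≤ p x) (hp1 : (∑' x, p x) = 1)
    (hent : Summable fun x => -(p x) * Real.logb 2 (p x)) :
    ∃ q : ℕ → 𝒳 → ℝ,
      (∀ w : ℕ, IsDyadicPMF (q w)) ∧
      (∀ x, p x = ∑' w : ℕ, ((1 : ℝ) / 2) ^ (w + 1) * q w x) ∧
      pmfEntropy p - 2 ≤ ∑' w : ℕ, ((1 : ℝ) / 2) ^ (w + 1) * pmfEntropy (q w) := by
  have hps : Summable p := by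
    by_contra h
    rw [tsum_eq_zero_of_not_summable h] at hp1
    exact zero_ne_one hp1
  have hp : HasSum p 1 := hp1 ▸ hps.hasSum
  obtain ⟨q, hq0, hq1, hqd, hqp⟩ := exists_decomp p hp0 hp
  refine ⟨q, fun w => ⟨hq0 w, (hq1 w).tsum_eq, hqd w⟩, fun x => (hqp x).tsum_eq.symm, ?_⟩
  have hp_le : ∀ x, p x ≤ 1 := fun x => le_hasSum hp x fun y _ => hp0 y
  have hq_le : ∀ w x, q w x ≤ 1 := fun w x => le_hasSum (hq1 w) x fun y _ => hq0 w y
  have hm0 : ∀ w x, 0 ≤ ((1 : ℝ) / 2) ^ (w + 1) * q w x := fun w x =>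
    mul_nonneg (by positivity) (hq0 w x)
  have hm_le : ∀ w x, ((1 : ℝ) / 2) ^ (w + 1) * q w x ≤ p x := fun w x =>
    le_hasSum (hqp x) w fun v _ => hm0 v x
  have hlp : ∀ x, 0 ≤ -Real.logb 2 (p x) := fun x => by
    have := Real.logb_nonpos (b := 2) (by norm_num) (hp0 x) (hp_le x)
    linarith
  have hqz : ∀ w x, p x = 0 → q w x = 0 := fun w x h => by
    have h1 := hm_le w x
    have h2 := hm0 w x
    have h3 : ((1 : ℝ) / 2) ^ (w + 1) * q w x = 0 := by linarith
    exact (mul_eq_zero.1 h3).resolve_left (by positivity)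
  have hgeo : HasSum (fun w : ℕ => ((1 : ℝ) / 2) ^ (w + 1)) 1 := by
    have := (hasSum_geometric_two).mul_left (1 / 2 : ℝ)
    rw [one_div_mul_cancel (two_ne_zero)] at this
    have he : (fun w : ℕ => ((1 : ℝ) / 2) ^ (w + 1)) = fun w => 1 / 2 * (1 / 2) ^ w :=
      funext fun w => pow_succ' _ _
    rw [he]
    exact this
  -- the weighted sum of self-informations
  let L : 𝒳 × ℕ → ℝ := fun z => (1 / 2 : ℝ) ^ (z.2 + 1) * q z.2 z.1 * (-Real.logb 2 (p z.1))
  let G : 𝒳 × ℕ → ℝ := fun z => (1 / 2 : ℝ) ^ (z.2 + 1) * (-(q z.2 z.1) * Real.logb 2 (q z.2 z.1))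
  let K : ℕ × 𝒳 → ℝ := fun z => ((z.1 : ℝ) + 1) * (1 / 2 : ℝ) ^ (z.1 + 1) * q z.1 z.2
  have hLx : ∀ x, HasSum (fun w => L (x, w)) (-(p x) * Real.logb 2 (p x)) := by
    intro x
    have := (hqp x).mul_right (-Real.logb 2 (p x))
    rwa [show p x * -Real.logb 2 (p x) = -(p x) * Real.logb 2 (p x) by ring] at this
  have hL0 : ∀ z, 0 ≤ L z := fun z => mul_nonneg (hm0 _ _) (hlp _)
  have hLs : Summable L := by
    rw [summable_prod_of_nonneg hL0]
    refine ⟨fun x => (hLx x).summable, ?_⟩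
    simp_rw [fun x => (hLx x).tsum_eq]
    exact hent
  have hLt : ∑' z, L z = pmfEntropy p := by
    rw [hLs.tsum_prod]
    simp_rw [fun x => (hLx x).tsum_eq]
    rfl
  have hG0 : ∀ z, 0 ≤ G z := fun z => by
    have := Real.logb_nonpos (b := 2) (by norm_num) (hq0 z.2 z.1) (hq_le z.2 z.1)
    refine mul_nonneg (by positivity) ?_
    rw [neg_mul, ← mul_neg]
    exact mul_nonneg (hq0 _ _) (by linarith)
  have hPs : Summable fun z : 𝒳 × ℕ => p z.1 * (1 / 2 : ℝ) ^ (z.2 + 1) :=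
    Summable.mul_of_nonneg hps hgeo.summable hp0 (fun w => by positivity)
  have hGs : Summable G := by
    refine Summable.of_nonneg_of_le hG0 (fun z => ?_)
      (hLs.add (hPs.mul_right (1 / Real.log 2)))
    have := mul_le_mul_of_nonneg_left (gibbs_pointwise (q z.2 z.1) (p z.1) (hq0 _ _) (hp0 _)
      (hqz _ _)) (show (0 : ℝ) ≤ (1 / 2 : ℝ) ^ (z.2 + 1) by positivity)
    refine this.trans (le_of_eq ?_)
    simp only [L]
    ring
  have hGt : ∑' z, G z = ∑' w : ℕ, ((1 : ℝ) / 2) ^ (w + 1) * pmfEntropy (q w) := by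
    have h1 : Summable fun z : ℕ × 𝒳 => G z.swap :=
      (Equiv.prodComm ℕ 𝒳).summable_iff.2 hGs
    have h2 : ∑' z : ℕ × 𝒳, G z.swap = ∑' z, G z := (Equiv.prodComm ℕ 𝒳).tsum_eq G
    rw [← h2, h1.tsum_prod]
    refine tsum_congr fun w => ?_
    exact tsum_mul_left (f := fun x => -(q w x) * Real.logb 2 (q w x))
      (a := ((1 : ℝ) / 2) ^ (w + 1))
  have hK2 : HasSum (fun w : ℕ => ((w : ℝ) + 1) * (1 / 2 : ℝ) ^ (w + 1)) 2 := by
    have := hasSum_coe_mul_geometric_of_norm_lt_one (𝕜 := ℝ) (r := 1 / 2) (by norm_num)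
    rw [← hasSum_nat_add_iff' 1] at this
    norm_num at this
    norm_num
    exact this
  have hKx : ∀ w, HasSum (fun x => K (w, x)) (((w : ℝ) + 1) * (1 / 2 : ℝ) ^ (w + 1)) := by
    intro w
    have := (hq1 w).mul_left (((w : ℝ) + 1) * (1 / 2 : ℝ) ^ (w + 1))
    rw [mul_one] at this
    exact this
  have hK0 : ∀ z, 0 ≤ K z := fun z => mul_nonneg (by positivity) (hq0 _ _)
  have hKs : Summable K := by
    rw [summable_prod_of_nonneg hK0]
    refine ⟨fun w => (hKx w).summable, ?_⟩
    simp_rw [fun w => (hKx w).tsum_eq]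
    exact hK2.summable
  have hKt : ∑' z, K z = 2 := by
    rw [hKs.tsum_prod]
    simp_rw [fun w => (hKx w).tsum_eq]
    exact hK2.tsum_eq
  have hKs' : Summable fun z : 𝒳 × ℕ => K z.swap := (Equiv.prodComm 𝒳 ℕ).summable_iff.2 hKs
  have hKt' : ∑' z : 𝒳 × ℕ, K z.swap = 2 := ((Equiv.prodComm 𝒳 ℕ).tsum_eq K).trans hKt
  have hle : ∀ z, L z ≤ G z + K z.swap := by
    rintro ⟨x, w⟩
    simp only [L, G, K, Prod.swap_prod_mk]
    rcases (hq0 w x).eq_or_lt with h | h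
    · simp [← h]
    · have hmpos : 0 < ((1 : ℝ) / 2) ^ (w + 1) * q w x := by positivity
      have h1 := Real.logb_le_logb_of_le (b := 2) (by norm_num) hmpos (hm_le w x)
      have h2 : Real.logb 2 (((1 : ℝ) / 2) ^ (w + 1) * q w x)
          = -((w : ℝ) + 1) + Real.logb 2 (q w x) := by
        rw [Real.logb_mul (by positivity) h.ne', Real.logb_pow, one_div, Real.logb_inv,
          Real.logb_self_eq_one (by norm_num)]
        push_cast; ring
      rw [h2] at h1
      have h3 := mul_le_mul_of_nonneg_left h1 hmpos.le
      linarith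
  have := hLs.tsum_le_tsum hle (hGs.add hKs')
  rw [hGs.tsum_add hKs', hLt, hGt, hKt'] at this
  linarith
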